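/- Let (W, r_1, …, r_n) be a Strip Packing instance whose rectangles are listed in the FQW-ordering, and let h_BL be the height of the Bottom-Left packing for this ordering. Then h_BL ≤ (13/6) · h_OPT. -/

import Mathlib

open scoped Classical
open MeasureTheory

/-- An axis-parallel rectangle, given by its width and its height. -/
structure Rect where
  w : ℝ
  h : ℝ

/-- A Strip Packing instance: a strip of width `W > 0` and `n` rectangles
`r 0, …, r (n-1)`, each with positive height and width at most `W`. -/
structure SPInstance (n : ℕ) where
  W : ℝ
  r : Fin n → Rect
  W_pos : 0 < W
  w_pos : ∀ i, 0 < (r i).w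
  w_le_W : ∀ i, (r i).w ≤ W
  h_pos : ∀ i, 0 < (r i).h

/-- The open box of rectangle `R` placed at position `p`. -/
def openBox (R : Rect) (p : ℝ × ℝ) : Set (ℝ × ℝ) :=
  Set.Ioo p.1 (p.1 + R.w) ×ˢ Set.Ioo p.2 (p.2 + R.h)

/-- The closed box of rectangle `R` placed at position `p`. -/
def closedBox (R : Rect) (p : ℝ × ℝ) : Set (ℝ × ℝ) :=
  Set.Icc p.1 (p.1 + R.w) ×ˢ Set.Icc p.2 (p.2 + R.h)

namespace SPInstance

variable {n : ℕ}

/-- Rectangle `i` placed at `p` lies inside the strip. -/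
def InStrip (I : SPInstance n) (i : Fin n) (p : ℝ × ℝ) : Prop :=
  0 ≤ p.1 ∧ p.1 + (I.r i).w ≤ I.W ∧ 0 ≤ p.2

/-- `pos` is a feasible packing: each rectangle lies in the strip and the open
boxes are pairwise disjoint. -/
def Feasible (I : SPInstance n) (pos : Fin n → ℝ × ℝ) : Prop :=
  (∀ i, I.InStrip i (pos i)) ∧
    Pairwise (fun i j : Fin n =>
      Disjoint (openBox (I.r i) (pos i)) (openBox (I.r j) (pos j)))

/-- The height of a packing, `max_i (y_i + h_i)`. -/
noncomputable def height (I : SPInstance n) (pos : Fin n → ℝ × ℝ) : ℝ :=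
  ⨆ i, ((pos i).2 + (I.r i).h)

/-- The minimum height of a feasible packing. -/
noncomputable def hOPT (I : SPInstance n) : ℝ :=
  sInf {H | ∃ pos, I.Feasible pos ∧ I.height pos = H}

/-- The maximum height of a rectangle of the instance. -/
noncomputable def hmax (I : SPInstance n) : ℝ :=
  ⨆ i, (I.r i).h

/-- Rectangle `i` can feasibly be placed at `p`, given the rectangles
`j < i` already placed at `pos j`. -/
def FeasibleAt (I : SPInstance n) (pos : Fin n → ℝ × ℝ) (i : Fin n) (p : ℝ × ℝ) : Prop :=
  I.InStrip i p ∧ ∀ j : Fin n, j < i →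
    Disjoint (openBox (I.r i) p) (openBox (I.r j) (pos j))

/-- `pos` is the Bottom-Left packing for the ordering `r 0, r 1, …`: every
rectangle is feasibly placed, at the lexicographically minimal `(y, x)`. -/
def IsBL (I : SPInstance n) (pos : Fin n → ℝ × ℝ) : Prop :=
  ∀ i : Fin n, I.FeasibleAt pos i (pos i) ∧
    ∀ p : ℝ × ℝ, I.FeasibleAt pos i p →
      (pos i).2 < p.2 ∨ ((pos i).2 = p.2 ∧ (pos i).1 ≤ p.1)

/-- Greedy construction of the set `F` of the FQW-partition, processing the
rectangles in the order `σ 0, σ 1, …` and adding a rectangle whenever the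
total width of `F` stays at most `W`. -/
noncomputable def greedyF (I : SPInstance n) (σ : Equiv.Perm (Fin n)) : Finset (Fin n) :=
  (List.finRange n).foldl
    (fun F k =>
      if (I.r (σ k)).w + ∑ f ∈ F, (I.r f).w ≤ I.W then insert (σ k) F else F) ∅

end SPInstance

/-- An FQW-partition datum: a processing order `σ` of the rectangles that is
sorted by decreasing height. -/
structure FQW {n : ℕ} (I : SPInstance n) where
  σ : Equiv.Perm (Fin n)
  sorted : ∀ k k' : Fin n, k ≤ k' → (I.r (σ k')).h ≤ (I.r (σ k)).h

namespace FQW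

variable {n : ℕ} {I : SPInstance n}

/-- The set `F` of the FQW-partition. -/
noncomputable def F (d : FQW I) : Finset (Fin n) := I.greedyF d.σ

/-- The set `𝒲` of the FQW-partition: rectangles not in `F` of width
greater than `W/2`. -/
noncomputable def Wset (d : FQW I) : Finset (Fin n) :=
  Finset.univ.filter fun i => i ∉ d.F ∧ I.W / 2 < (I.r i).w

/-- The set `Q` of the FQW-partition: all remaining rectangles. -/
noncomputable def Q (d : FQW I) : Finset (Fin n) :=
  Finset.univ.filter fun i => i ∉ d.F ∧ ¬ I.W / 2 < (I.r i).w

/-- The rectangles of the instance are listed in the FQW-ordering: first `F`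
sorted by decreasing height, then `Q` sorted by decreasing width, then `𝒲`. -/
def IsOrdered (d : FQW I) : Prop :=
  (∀ i : Fin n, i ∈ d.F ↔ (i : ℕ) < d.F.card) ∧
  (∀ i : Fin n, i ∈ d.Q ↔ d.F.card ≤ (i : ℕ) ∧ (i : ℕ) < d.F.card + d.Q.card) ∧
  (∀ i j : Fin n, (i : ℕ) ≤ (j : ℕ) → (j : ℕ) < d.F.card → (I.r j).h ≤ (I.r i).h) ∧
  (∀ i j : Fin n, d.F.card ≤ (i : ℕ) → (i : ℕ) ≤ (j : ℕ) →
    (j : ℕ) < d.F.card + d.Q.card → (I.r j).w ≤ (I.r i).w)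

end FQW

/-- `max {y_{r_1}, …, y_{r_i}}` (the first `i` rectangles, `0` if `i = 0`):
the lower boundary of the region `H_{i+1}` of the horizontal strip partition. -/
noncomputable def maxYBelow {n : ℕ} (pos : Fin n → ℝ × ℝ) (i : ℕ) : ℝ :=
  ⨆ j : {j : Fin n // (j : ℕ) < i}, (pos (j : Fin n)).2

namespace SPInstance

variable {n : ℕ}

/-- The horizontal line at height `t` is proper: it meets no top or
bottom face of a rectangle. -/
def ProperLine (I : SPInstance n) (pos : Fin n → ℝ × ℝ) (t : ℝ) : Prop :=
  ∀ j : Fin n, t ≠ (pos j).2 ∧ t ≠ (pos j).2 + (I.r j).h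

/-- Rectangle `j` intersects the horizontal line at height `t`. -/
def Intersects (I : SPInstance n) (pos : Fin n → ℝ × ℝ) (j : Fin n) (t : ℝ) : Prop :=
  (pos j).2 < t ∧ t < (pos j).2 + (I.r j).h

/-- The occupied part of the horizontal line at height `t`. -/
noncomputable def occupied (I : SPInstance n) (pos : Fin n → ℝ × ℝ) (t : ℝ) : Set ℝ :=
  ⋃ j ∈ {j : Fin n | I.Intersects pos j t}, Set.Icc (pos j).1 ((pos j).1 + (I.r j).w)

/-- The occupied fraction of the horizontal line at height `t`. -/
noncomputable def occFrac (I : SPInstance n) (pos : Fin n → ℝ × ℝ) (t : ℝ) : ℝ :=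
  (volume (I.occupied pos t)).toReal / I.W

/-- The region `H_{i+1}` (for the `0`-based index `i`) of the horizontal strip
partition: `[0, W] × [max {y_{r_1}, …, y_{r_i}}, y_{r_{i+1}})`. -/
def regionH (I : SPInstance n) (pos : Fin n → ℝ × ℝ) (i : Fin n) : Set (ℝ × ℝ) :=
  Set.Icc 0 I.W ×ˢ Set.Ico (maxYBelow pos (i : ℕ)) (pos i).2

/-- `G` is an unoccupied gap of the horizontal line at height `t`: a maximal
subinterval of `[0, W]` disjoint from the occupied part of the line. -/
def IsGap (I : SPInstance n) (pos : Fin n → ℝ × ℝ) (t : ℝ) (G : Set ℝ) : Prop :=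
  G.Nonempty ∧ G ⊆ Set.Icc 0 I.W ∧ G.OrdConnected ∧ Disjoint G (I.occupied pos t) ∧
    ∀ G' : Set ℝ, G'.OrdConnected → G' ⊆ Set.Icc 0 I.W →
      Disjoint G' (I.occupied pos t) → G ⊆ G' → G' = G

/-- `j` is a left supporter of `i`: it comes before `i` in the ordering, its
right face touches the left face of `i`, and their open `y`-ranges intersect. -/
def IsLeftSupporter (I : SPInstance n) (pos : Fin n → ℝ × ℝ) (i j : Fin n) : Prop :=
  j < i ∧ (pos j).1 + (I.r j).w = (pos i).1 ∧
    (pos j).2 < (pos i).2 + (I.r i).h ∧ (pos i).2 < (pos j).2 + (I.r j).h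

/-- `j` is a bottom supporter of `i`: it comes before `i` in the ordering, its
top face touches the bottom face of `i`, and their open `x`-ranges intersect. -/
def IsBottomSupporter (I : SPInstance n) (pos : Fin n → ℝ × ℝ) (i j : Fin n) : Prop :=
  j < i ∧ (pos j).2 + (I.r j).h = (pos i).2 ∧
    (pos j).1 < (pos i).1 + (I.r i).w ∧ (pos i).1 < (pos j).1 + (I.r j).w

/-- `j` is the leftmost bottom supporter of `i`. -/
def IsLeftmostBottomSupporter (I : SPInstance n) (pos : Fin n → ℝ × ℝ)
    (i j : Fin n) : Prop :=
  I.IsBottomSupporter pos i j ∧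
    ∀ j' : Fin n, I.IsBottomSupporter pos i j' → (pos j).1 ≤ (pos j').1

end SPInstance

/-- `iT` is the top rectangle `r_T` of `Q`: the rectangle of `Q` whose top face
is highest, ties broken by highest bottom face. -/
def IsTopRect {n : ℕ} (I : SPInstance n) (d : FQW I) (pos : Fin n → ℝ × ℝ)
    (iT : Fin n) : Prop :=
  iT ∈ d.Q ∧ ∀ j ∈ d.Q,
    (pos j).2 + (I.r j).h < (pos iT).2 + (I.r iT).h ∨
    ((pos j).2 + (I.r j).h = (pos iT).2 + (I.r iT).h ∧ (pos j).2 ≤ (pos iT).2)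

/-- `iL` is the left rectangle `r_L` of `Q`: the first rectangle of `Q` in the
ordering touching the left strip boundary, and `r_T` if there is none. -/
def IsLeftRect {n : ℕ} (I : SPInstance n) (d : FQW I) (pos : Fin n → ℝ × ℝ)
    (iT iL : Fin n) : Prop :=
  (iL ∈ d.Q ∧ (pos iL).1 = 0 ∧ ∀ j ∈ d.Q, (pos j).1 = 0 → iL ≤ j) ∨
  ((∀ j ∈ d.Q, (pos j).1 ≠ 0) ∧ iL = iT)

/-- The region `H' = [0, W] × ([0, h_{r_T}] ∪ [y_{r_T}, y_{r_T} + h_{r_T}])`. -/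
def Hprime {n : ℕ} (I : SPInstance n) (pos : Fin n → ℝ × ℝ) (iT : Fin n) :
    Set (ℝ × ℝ) :=
  Set.Icc 0 I.W ×ˢ
    (Set.Icc 0 (I.r iT).h ∪ Set.Icc (pos iT).2 ((pos iT).2 + (I.r iT).h))

/-- The type `T(ℓ)` of the proper horizontal line at height `t`: the rectangles
of `Q` intersecting the line whose index is smaller than the least index `j`
with `y_{r_j} > t` (equivalently, all rectangles with index at most theirs have
bottom face at height at most `t`). -/
noncomputable def TypeOf {n : ℕ} (I : SPInstance n) (d : FQW I)
    (pos : Fin n → ℝ × ℝ) (t : ℝ) : Finset (Fin n) :=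
  Finset.univ.filter fun i =>
    i ∈ d.Q ∧ I.Intersects pos i t ∧ ∀ j : Fin n, j ≤ i → (pos j).2 ≤ t

/-- `i` is `LM(ℓ)`: the rectangle of `T(ℓ)` with smallest `x`-coordinate. -/
def IsLM {n : ℕ} (I : SPInstance n) (d : FQW I) (pos : Fin n → ℝ × ℝ) (t : ℝ)
    (i : Fin n) : Prop :=
  i ∈ TypeOf I d pos t ∧ ∀ j ∈ TypeOf I d pos t, (pos i).1 ≤ (pos j).1

/-- The horizontal line at height `t` lies in `H_{a+2} ∪ ⋯ ∪ H_L`, where `iL`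
is the `0`-based index of `r_L` (so `L = iL + 1`, `1`-based). -/
def LineInHUnion {n : ℕ} (I : SPInstance n) (d : FQW I) (pos : Fin n → ℝ × ℝ)
    (iL : Fin n) (t : ℝ) : Prop :=
  ∃ m : Fin n, d.F.card + 1 ≤ (m : ℕ) ∧ m ≤ iL ∧
    maxYBelow pos (m : ℕ) ≤ t ∧ t < (pos m).2

/-- The space `H_{a+2} ∪ ⋯ ∪ H_L`, where `iL` is the `0`-based index of `r_L`. -/
def regionHUnion {n : ℕ} (I : SPInstance n) (d : FQW I) (pos : Fin n → ℝ × ℝ)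
    (iL : Fin n) : Set (ℝ × ℝ) :=
  ⋃ m ∈ {m : Fin n | d.F.card + 1 ≤ (m : ℕ) ∧ m ≤ iL}, I.regionH pos m

/-- The horizontal line at height `t` belongs to `L^k`: it is a proper line of
order `k` lying in `H_{a+2} ∪ ⋯ ∪ H_L`. -/
def InLk {n : ℕ} (I : SPInstance n) (d : FQW I) (pos : Fin n → ℝ × ℝ)
    (iL : Fin n) (k : ℕ) (t : ℝ) : Prop :=
  I.ProperLine pos t ∧ LineInHUnion I d pos iL t ∧ (TypeOf I d pos t).card = k

/-- `i` belongs to `R^k`: it is `LM(ℓ)` for some line `ℓ ∈ L^k`. -/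
def InRk {n : ℕ} (I : SPInstance n) (d : FQW I) (pos : Fin n → ℝ × ℝ)
    (iL : Fin n) (k : ℕ) (i : Fin n) : Prop :=
  ∃ t : ℝ, InLk I d pos iL k t ∧ IsLM I d pos t i

/-- `i` is `LM^k`: the rectangle of `R^k` with smallest `x`-coordinate,
ties broken by largest `y`-coordinate. -/
def IsLMk {n : ℕ} (I : SPInstance n) (d : FQW I) (pos : Fin n → ℝ × ℝ)
    (iL : Fin n) (k : ℕ) (i : Fin n) : Prop :=
  InRk I d pos iL k i ∧ ∀ j : Fin n, InRk I d pos iL k j →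
    (pos i).1 < (pos j).1 ∨ ((pos i).1 = (pos j).1 ∧ (pos j).2 ≤ (pos i).2)

/-- `v = x_F^ℓ` for the line `ℓ` at height `t`: the right face `x + w` of the
rightmost rectangle of `F` intersecting `ℓ`, and `0` if there is none. -/
def IsXF {n : ℕ} (I : SPInstance n) (d : FQW I) (pos : Fin n → ℝ × ℝ)
    (t v : ℝ) : Prop :=
  ((∃ f ∈ d.F, I.Intersects pos f t ∧ v = (pos f).1 + (I.r f).w) ∧
    ∀ f ∈ d.F, I.Intersects pos f t → (pos f).1 + (I.r f).w ≤ v) ∨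
  ((∀ f ∈ d.F, ¬ I.Intersects pos f t) ∧ v = 0)

/-!
Fix a feasible packing of height `H` and call `W - 2 * (occupied width)` the deficit of a horizontal
line of the Bottom-Left packing. If no line had a positive deficit, comparing areas would give
`h_BL ≤ 2 * H`.

The packing puts `F` on the bottom of the strip, left to right by decreasing height. On a line where
some rectangle `m` of `Q` did not fit, the rectangles of `Q` placed before `m` are at least as wide
as `m`, so from the leftmost of them, `q`, on at least half of the line is occupied. A positive
deficit thus comes from a gap between `F` and `q`, and it is at most the width of the part of this
gap in the left third of the strip. The rectangles of `F` below the gap are at least as high as the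
left supporter of `q`, which reaches above the bottom of `q`; as `q` has height at most `H / 2`, the
line is at most `H / 2` above them. Charging the deficit to those rectangles of `F` costs at most
`(W / 3) * (H / 2)` in total, which is an extra height of `H / 6`.

This applies to the lines below the bottom of a rectangle `v` of `Q` with the highest top. The lines
through `v` are paired with the bottom-most lines: as `v` was rejected from `F`, two paired lines
together are occupied to more than `W`. All lines above `v` meet a rectangle of `𝒲` and have no
deficit. If there is no such `v` with top above `H`, only rectangles of `𝒲` reach above `H`, and
their total height is at most `H` because no two of them fit side by side.
-/

/-! ### Intervals, step functions and prefix sums -/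

section Intervals

variable {ι : Type*} {S : Finset ι} {u v : ι → ℝ} {a b : ℝ}

lemma disjoint_Ioo_add_iff {x y : ℝ} (ha : 0 < a) (hb : 0 < b) :
    Disjoint (Set.Ioo x (x + a)) (Set.Ioo y (y + b)) ↔ x + a ≤ y ∨ y + b ≤ x := by
  rw [Set.Ioo_disjoint_Ioo, le_max_iff, min_le_iff, min_le_iff]
  grind

lemma sum_length_le_of_pairwiseDisjoint_Ioo (hab : a ≤ b) (huv : ∀ i ∈ S, u i ≤ v i)
    (hau : ∀ i ∈ S, a ≤ u i) (hvb : ∀ i ∈ S, v i ≤ b)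
    (hdisj : (S : Set ι).PairwiseDisjoint fun i => Set.Ioo (u i) (v i)) :
    ∑ i ∈ S, (v i - u i) ≤ b - a := by
  have hsub : ⋃ i ∈ S, Set.Ioo (u i) (v i) ⊆ Set.Ioo a b :=
    Set.iUnion₂_subset fun i hi => Set.Ioo_subset_Ioo (hau i hi) (hvb i hi)
  calc ∑ i ∈ S, (v i - u i) = ∑ i ∈ S, volume.real (Set.Ioo (u i) (v i)) :=
        Finset.sum_congr rfl fun i hi => (Real.volume_real_Ioo_of_le (huv i hi)).symm
    _ = volume.real (⋃ i ∈ S, Set.Ioo (u i) (v i)) :=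
        (measureReal_biUnion_finset hdisj (fun _ _ => measurableSet_Ioo)
          (fun _ _ => measure_Ioo_lt_top.ne)).symm
    _ ≤ volume.real (Set.Ioo a b) := measureReal_mono hsub measure_Ioo_lt_top.ne
    _ = b - a := Real.volume_real_Ioo_of_le hab

lemma length_le_sum_of_ae_cover (huv : ∀ i ∈ S, u i ≤ v i)
    (hcover : ∀ᵐ t, t ∈ Set.Ioo a b → ∃ i ∈ S, t ∈ Set.Icc (u i) (v i)) :
    b - a ≤ ∑ i ∈ S, (v i - u i) := by
  have hae : Set.Ioo a b ≤ᵐ[volume] ⋃ i ∈ S, Set.Icc (u i) (v i) := by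
    filter_upwards [hcover] with t ht htab
    obtain ⟨i, hi, hti⟩ := ht htab
    exact Set.mem_biUnion hi hti
  have hfin : volume (⋃ i ∈ S, Set.Icc (u i) (v i)) ≠ ⊤ :=
    (S.isCompact_biUnion fun _ _ => isCompact_Icc).measure_lt_top.ne
  calc b - a ≤ max (b - a) 0 := le_max_left _ _
    _ = volume.real (Set.Ioo a b) := Real.volume_real_Ioo.symm
    _ ≤ volume.real (⋃ i ∈ S, Set.Icc (u i) (v i)) :=
        ENNReal.toReal_mono hfin (measure_mono_ae hae)
    _ ≤ ∑ i ∈ S, volume.real (Set.Icc (u i) (v i)) := measureReal_biUnion_finset_le _ _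
    _ = ∑ i ∈ S, (v i - u i) :=
        Finset.sum_congr rfl fun i hi => Real.volume_real_Icc_of_le (huv i hi)

end Intervals

section StepSum

variable {ι : Type*} {S : Finset ι} {c u v : ι → ℝ} {p q : ℝ}

/-- The step function `∑ i ∈ S, c i • 1_(u i, v i)`. The occupied width of a horizontal line and
the charge compensating its deficit, as functions of the height of the line, are both of this
form. -/
noncomputable def stepSum (S : Finset ι) (c u v : ι → ℝ) (t : ℝ) : ℝ :=
  ∑ i ∈ S with u i < t ∧ t < v i, c i

lemma stepSum_eq_sum_indicator (S : Finset ι) (c u v : ι → ℝ) :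
    stepSum S c u v =
      fun t => ∑ i ∈ S, (Set.Ioo (u i) (v i)).indicator (fun _ => c i) t := by
  ext t
  simp only [stepSum, Finset.sum_filter, Set.indicator_apply, Set.mem_Ioo]

lemma stepSum_nonneg (hc : ∀ i ∈ S, 0 ≤ c i) (t : ℝ) : 0 ≤ stepSum S c u v t :=
  Finset.sum_nonneg fun i hi => hc i (Finset.mem_filter.1 hi).1

lemma sum_le_stepSum (hc : ∀ i ∈ S, 0 ≤ c i) {A : Finset ι} (hA : A ⊆ S) {t : ℝ}
    (ht : ∀ i ∈ A, u i < t ∧ t < v i) : ∑ i ∈ A, c i ≤ stepSum S c u v t :=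
  Finset.sum_le_sum_of_subset_of_nonneg
    (fun i hi => Finset.mem_filter.2 ⟨hA hi, ht i hi⟩)
    fun i hi _ => hc i (Finset.mem_filter.1 hi).1

lemma integrable_indicator_Ioo_const (a b k : ℝ) :
    Integrable ((Set.Ioo a b).indicator fun _ => k) :=
  (integrable_indicator_iff measurableSet_Ioo).2 (integrableOn_const measure_Ioo_lt_top.ne)

lemma intervalIntegrable_stepSum (S : Finset ι) (c u v : ι → ℝ) (p q : ℝ) :
    IntervalIntegrable (stepSum S c u v) volume p q := by
  rw [stepSum_eq_sum_indicator]
  exact (integrable_finsetSum _ fun i _ =>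
    integrable_indicator_Ioo_const _ _ _).intervalIntegrable

lemma intervalIntegral_stepSum (hpq : p ≤ q) :
    ∫ t in p..q, stepSum S c u v t =
      ∑ i ∈ S, volume.real (Set.Ioc p q ∩ Set.Ioo (u i) (v i)) * c i := by
  simp only [stepSum_eq_sum_indicator]
  rw [intervalIntegral.integral_finsetSum fun i _ =>
    (integrable_indicator_Ioo_const _ _ _).intervalIntegrable]
  refine Finset.sum_congr rfl fun i _ => ?_
  rw [intervalIntegral.integral_of_le hpq, setIntegral_indicator measurableSet_Ioo,
    setIntegral_const, smul_eq_mul]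

lemma intervalIntegral_stepSum_le (hpq : p ≤ q) (hc : ∀ i ∈ S, 0 ≤ c i)
    (huv : ∀ i ∈ S, u i ≤ v i) :
    ∫ t in p..q, stepSum S c u v t ≤ ∑ i ∈ S, (v i - u i) * c i := by
  rw [intervalIntegral_stepSum hpq]
  refine Finset.sum_le_sum fun i hi => mul_le_mul_of_nonneg_right ?_ (hc i hi)
  rw [← Real.volume_real_Ioo_of_le (huv i hi)]
  exact measureReal_mono Set.inter_subset_right measure_Ioo_lt_top.ne

lemma intervalIntegral_stepSum_eq (hpq : p ≤ q) (hpu : ∀ i ∈ S, p ≤ u i)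
    (huv : ∀ i ∈ S, u i ≤ v i) (hvq : ∀ i ∈ S, v i ≤ q) :
    ∫ t in p..q, stepSum S c u v t = ∑ i ∈ S, (v i - u i) * c i := by
  rw [intervalIntegral_stepSum hpq]
  refine Finset.sum_congr rfl fun i hi => ?_
  have hsub : Set.Ioo (u i) (v i) ⊆ Set.Ioc p q :=
    (Set.Ioo_subset_Ioo (hpu i hi) (hvq i hi)).trans Set.Ioo_subset_Ioc_self
  rw [Set.inter_eq_right.2 hsub, Real.volume_real_Ioo_of_le (huv i hi)]

end StepSum

section IntervalIntegral

variable {f : ℝ → ℝ} {a b c : ℝ}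

lemma intervalIntegral_nonpos_of_ae_Ioo (hab : a ≤ b)
    (hf : ∀ᵐ t, t ∈ Set.Ioo a b → f t ≤ 0) : ∫ t in a..b, f t ≤ 0 := by
  rw [intervalIntegral.integral_of_le hab, integral_Ioc_eq_integral_Ioo]
  exact setIntegral_nonpos_of_ae_restrict ((ae_restrict_iff' measurableSet_Ioo).2 hf)

lemma intervalIntegral_nonpos_of_paired (hf : ∀ p q, IntervalIntegrable f volume p q)
    (ha : 0 ≤ a) (hab : a ≤ b) (hc : b + a ≤ c)
    (hpaired : ∀ t ∈ Set.Ioo 0 a, f t + f (t + b) ≤ 0)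
    (hmiddle : ∀ᵐ t, t ∈ Set.Ioo a b → f t ≤ 0)
    (habove : ∀ᵐ t, t ∈ Set.Ioo (b + a) c → f t ≤ 0) :
    ∫ t in (0 : ℝ)..c, f t ≤ 0 := by
  have hshift : ∫ t in (0 : ℝ)..a, f (t + b) = ∫ t in b..(b + a), f t := by
    rw [intervalIntegral.integral_comp_add_right, zero_add, add_comm a b]
  have hshift_int : IntervalIntegrable (fun t => f (t + b)) volume 0 a := by
    simpa using (hf b (b + a)).comp_add_right b
  have houter : (∫ t in (0 : ℝ)..a, f t) + ∫ t in b..(b + a), f t ≤ 0 := by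
    rw [← hshift, ← intervalIntegral.integral_add (hf _ _) hshift_int]
    exact intervalIntegral_nonpos_of_ae_Ioo ha (.of_forall hpaired)
  have hmid := intervalIntegral_nonpos_of_ae_Ioo hab hmiddle
  have htop := intervalIntegral_nonpos_of_ae_Ioo hc habove
  rw [← intervalIntegral.integral_add_adjacent_intervals (hf 0 a) (hf a c),
    ← intervalIntegral.integral_add_adjacent_intervals (hf a b) (hf b c),
    ← intervalIntegral.integral_add_adjacent_intervals (hf b (b + a)) (hf (b + a) c)]
  linarith

end IntervalIntegral

section PrefixSums

variable {ι M : Type*} [LinearOrder ι] [LocallyFiniteOrderBot ι] [AddCommMonoid M]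

lemma eq_Iio_of_isLowerSet_insert {a : ι} {A : Finset ι}
    (hA : IsLowerSet ((insert a A : Finset ι) : Set ι)) (hmax : ∀ i ∈ A, i < a) :
    A = Finset.Iio a := by
  ext i
  refine ⟨fun hi => Finset.mem_Iio.2 (hmax i hi), fun hi => ?_⟩
  have hia := Finset.mem_Iio.1 hi
  exact Finset.mem_of_mem_insert_of_ne (hA hia.le (Finset.mem_insert_self a A)) hia.ne

lemma sum_comp_prefixSum_sub {G : Type*} [AddCommGroup G] (w : ι → M) (ψ : M → G) {A : Finset ι}
    (hA : IsLowerSet (A : Set ι)) :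
    ∑ i ∈ A, (ψ (∑ j ∈ Finset.Iio i, w j + w i) - ψ (∑ j ∈ Finset.Iio i, w j)) =
      ψ (∑ i ∈ A, w i) - ψ 0 := by
  induction A using Finset.induction_on_max with
  | empty => simp
  | insert a A hmax ih =>
    have hAa := eq_Iio_of_isLowerSet_insert hA hmax
    have hlower : IsLowerSet (A : Set ι) := by simpa [hAa] using isLowerSet_Iio a
    have ha : a ∉ A := fun h => (hmax a h).false
    rw [Finset.sum_insert ha, Finset.sum_insert ha, ih hlower, ← hAa,
      add_comm (w a)]
    abel

lemma exists_prefixSum_le_lt [LinearOrder M] {w : ι → M} {A : Finset ι}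
    (hA : IsLowerSet (A : Set ι)) {z : M} (hz : 0 ≤ z) (hzA : z < ∑ i ∈ A, w i) :
    ∃ i ∈ A, ∑ j ∈ Finset.Iio i, w j ≤ z ∧ z < ∑ j ∈ Finset.Iio i, w j + w i := by
  induction A using Finset.induction_on_max with
  | empty => exact absurd hz (by simpa using hzA)
  | insert a A hmax ih =>
    have hAa := eq_Iio_of_isLowerSet_insert hA hmax
    have hlower : IsLowerSet (A : Set ι) := by simpa [hAa] using isLowerSet_Iio a
    have ha : a ∉ A := fun h => (hmax a h).false
    by_cases hlt : z < ∑ i ∈ A, w i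
    · obtain ⟨i, hi, hiz⟩ := ih hlower hlt
      exact ⟨i, Finset.mem_insert_of_mem hi, hiz⟩
    · refine ⟨a, Finset.mem_insert_self a A, ?_⟩
      rw [Finset.sum_insert ha, add_comm] at hzA
      rw [← hAa]
      exact ⟨not_lt.1 hlt, hzA⟩

end PrefixSums

/-! ### Packings and Bottom-Left packings -/

lemma disjoint_openBox_iff {R S : Rect} {p q : ℝ × ℝ} (hRw : 0 < R.w) (hRh : 0 < R.h)
    (hSw : 0 < S.w) (hSh : 0 < S.h) :
    Disjoint (openBox R p) (openBox S q) ↔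
      (p.1 + R.w ≤ q.1 ∨ q.1 + S.w ≤ p.1) ∨ (p.2 + R.h ≤ q.2 ∨ q.2 + S.h ≤ p.2) := by
  rw [openBox, openBox, Set.disjoint_prod, disjoint_Ioo_add_iff hRw hSw,
    disjoint_Ioo_add_iff hRh hSh]

namespace SPInstance

variable {n : ℕ} {I : SPInstance n} {pos : Fin n → ℝ × ℝ}

section Feasible

lemma Feasible.separated (hf : I.Feasible pos) {i j : Fin n} (hij : i ≠ j) :
    ((pos i).1 + (I.r i).w ≤ (pos j).1 ∨ (pos j).1 + (I.r j).w ≤ (pos i).1) ∨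
      ((pos i).2 + (I.r i).h ≤ (pos j).2 ∨ (pos j).2 + (I.r j).h ≤ (pos i).2) :=
  (disjoint_openBox_iff (I.w_pos i) (I.h_pos i) (I.w_pos j) (I.h_pos j)).1 (hf.2 hij)

lemma top_le_height (pos : Fin n → ℝ × ℝ) (i : Fin n) :
    (pos i).2 + (I.r i).h ≤ I.height pos :=
  le_ciSup (f := fun i => (pos i).2 + (I.r i).h) (Set.finite_range _).bddAbove i

lemma Feasible.height_nonneg (hf : I.Feasible pos) : 0 ≤ I.height pos :=
  Real.iSup_nonneg fun i => add_nonneg (hf.1 i).2.2 (I.h_pos i).le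

lemma Feasible.sum_w_le (hf : I.Feasible pos) {S : Finset (Fin n)} {t : ℝ}
    (hS : ∀ i ∈ S, I.Intersects pos i t) : ∑ i ∈ S, (I.r i).w ≤ I.W := by
  have hlength := sum_length_le_of_pairwiseDisjoint_Ioo (S := S) (u := fun i => (pos i).1)
    (v := fun i => (pos i).1 + (I.r i).w) I.W_pos.le
    (fun i _ => le_add_of_nonneg_right (I.w_pos i).le) (fun i _ => (hf.1 i).1)
    (fun i _ => (hf.1 i).2.1) fun i hi j hj hij => by
      refine (disjoint_Ioo_add_iff (I.w_pos i) (I.w_pos j)).2 ?_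
      obtain ⟨hyi, hit⟩ := hS i hi
      obtain ⟨hyj, hjt⟩ := hS j hj
      rcases hf.separated hij with hx | hy | hy
      · exact hx
      all_goals linarith
  simpa using hlength

lemma Feasible.sum_h_le_height_of_half_lt_w (hf : I.Feasible pos) {S : Finset (Fin n)}
    (hS : ∀ i ∈ S, I.W / 2 < (I.r i).w) : ∑ i ∈ S, (I.r i).h ≤ I.height pos := by
  have hlength := sum_length_le_of_pairwiseDisjoint_Ioo (S := S) (u := fun i => (pos i).2)
    (v := fun i => (pos i).2 + (I.r i).h) hf.height_nonneg
    (fun i _ => le_add_of_nonneg_right (I.h_pos i).le) (fun i _ => (hf.1 i).2.2)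
    (fun i _ => top_le_height pos i) fun i hi j hj hij => by
      refine (disjoint_Ioo_add_iff (I.h_pos i) (I.h_pos j)).2 ?_
      obtain ⟨hxi, hxiW, -⟩ := hf.1 i
      obtain ⟨hxj, hxjW, -⟩ := hf.1 j
      have hwi := hS i hi
      have hwj := hS j hj
      rcases hf.separated hij with (hx | hx) | hy
      · linarith
      · linarith
      · exact hy
  simpa using hlength

end Feasible

section LineWidth

/-- The total width of the rectangles meeting the horizontal line at height `t`. It is a sum over
the rectangles rather than the measure of `occupied`, so that its integral over `t` is an area
without any reference to disjointness. -/
noncomputable def lineWidth (I : SPInstance n) (pos : Fin n → ℝ × ℝ) : ℝ → ℝ :=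
  stepSum Finset.univ (fun i => (I.r i).w) (fun i => (pos i).2)
    fun i => (pos i).2 + (I.r i).h

lemma sum_w_le_lineWidth {S : Finset (Fin n)} {t : ℝ} (hS : ∀ i ∈ S, I.Intersects pos i t) :
    ∑ i ∈ S, (I.r i).w ≤ I.lineWidth pos t :=
  sum_le_stepSum (fun i _ => (I.w_pos i).le) (Finset.subset_univ S) hS

lemma w_le_lineWidth {i : Fin n} {t : ℝ} (hi : I.Intersects pos i t) :
    (I.r i).w ≤ I.lineWidth pos t := by
  simpa using sum_w_le_lineWidth (S := {i}) (by simpa using hi)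

lemma Feasible.lineWidth_le (hf : I.Feasible pos) (t : ℝ) : I.lineWidth pos t ≤ I.W := by
  rw [lineWidth, stepSum]
  exact hf.sum_w_le fun _ hi => (Finset.mem_filter.1 hi).2

lemma integral_lineWidth_le (pos : Fin n → ℝ × ℝ) {K : ℝ} (hK : 0 ≤ K) :
    ∫ t in (0 : ℝ)..K, I.lineWidth pos t ≤ ∑ i, (I.r i).h * (I.r i).w := by
  simpa [lineWidth] using intervalIntegral_stepSum_le hK (fun i _ => (I.w_pos i).le)
    fun i _ => le_add_of_nonneg_right (a := (pos i).2) (I.h_pos i).le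

lemma Feasible.area_le (hf : I.Feasible pos) :
    ∑ i, (I.r i).h * (I.r i).w ≤ I.W * I.height pos := by
  have harea : ∫ t in (0 : ℝ)..I.height pos, I.lineWidth pos t = ∑ i, (I.r i).h * (I.r i).w := by
    simpa [lineWidth] using intervalIntegral_stepSum_eq hf.height_nonneg (fun i _ => (hf.1 i).2.2)
      (fun i _ => le_add_of_nonneg_right (I.h_pos i).le) (fun i _ => top_le_height pos i)
  calc ∑ i, (I.r i).h * (I.r i).w = ∫ t in (0 : ℝ)..I.height pos, I.lineWidth pos t := harea.symm
    _ ≤ ∫ _ in (0 : ℝ)..I.height pos, I.W :=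
        intervalIntegral.integral_mono_on hf.height_nonneg (intervalIntegrable_stepSum ..)
          intervalIntegrable_const fun t _ => hf.lineWidth_le t
    _ = I.W * I.height pos := by simp [mul_comm]

lemma ae_properLine (I : SPInstance n) (pos : Fin n → ℝ × ℝ) : ∀ᵐ t, I.ProperLine pos t := by
  refine ae_all_iff.2 fun j => ?_
  filter_upwards [Measure.ae_ne volume (pos j).2,
    Measure.ae_ne volume ((pos j).2 + (I.r j).h)] with t hbottom htop
  exact ⟨hbottom, htop⟩

end LineWidth

section BottomLeft

/-- The rectangle `m` is the first one whose bottom face lies above height `t`, and all previous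
bottom faces lie strictly below: a line at height `t`, avoiding bottom faces, in the region `H_m`
of the horizontal strip partition. -/
def FirstAbove (pos : Fin n → ℝ × ℝ) (t : ℝ) (m : Fin n) : Prop :=
  t < (pos m).2 ∧ ∀ j < m, (pos j).2 < t

lemma ProperLine.exists_firstAbove {t : ℝ} (ht : I.ProperLine pos t) {v : Fin n}
    (hv : t < (pos v).2) : ∃ m ≤ v, FirstAbove pos t m := by
  obtain ⟨m, hmv, hm⟩ := exists_minimal_le_of_wellFoundedLT (fun i => t < (pos i).2) v hv
  refine ⟨m, hmv, hm.prop, fun j hj => ?_⟩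
  exact (not_lt.1 (hm.not_prop_of_lt hj)).lt_of_ne (ht j).1.symm

lemma IsBL.feasible (hBL : I.IsBL pos) : I.Feasible pos := by
  refine ⟨fun i => (hBL i).1.1, fun i j hij => ?_⟩
  rcases hij.lt_or_gt with h | h
  · exact ((hBL j).1.2 i h).symm
  · exact (hBL i).1.2 j h

/-- Otherwise the rectangle could slide to the left. -/
lemma IsBL.exists_isLeftSupporter (hBL : I.IsBL pos) {q : Fin n} (hq : 0 < (pos q).1) :
    ∃ s, I.IsLeftSupporter pos q s := by
  by_contra! hnone
  let S : Finset (Fin n) := {j | j < q ∧ (pos j).1 + (I.r j).w ≤ (pos q).1 ∧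
    (pos j).2 < (pos q).2 + (I.r q).h ∧ (pos q).2 < (pos j).2 + (I.r j).h}
  obtain ⟨c, hc0, hcq, hcS⟩ : ∃ c, 0 ≤ c ∧ c < (pos q).1 ∧
      ∀ j ∈ S, (pos j).1 + (I.r j).w ≤ c := by
    rcases S.eq_empty_or_nonempty with hS | hS
    · exact ⟨0, le_rfl, hq, by simp [hS]⟩
    · obtain ⟨j, hj, hmax⟩ := S.exists_max_image (fun j => (pos j).1 + (I.r j).w) hS
      obtain ⟨hjq, hjx, hjy⟩ := (Finset.mem_filter.1 hj).2
      exact ⟨_, add_nonneg (hBL j).1.1.1 (I.w_pos j).le,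
        hjx.lt_of_ne fun h => hnone j ⟨hjq, h, hjy⟩, hmax⟩
  obtain ⟨-, hqW, hqy⟩ := (hBL q).1.1
  have hslide : I.FeasibleAt pos q (c, (pos q).2) := by
    refine ⟨⟨hc0, by linarith, hqy⟩, fun j hj => ?_⟩
    rw [disjoint_openBox_iff (I.w_pos q) (I.h_pos q) (I.w_pos j) (I.h_pos j)]
    have hmem : (pos j).1 + (I.r j).w ≤ (pos q).1 → (pos j).2 < (pos q).2 + (I.r q).h →
        (pos q).2 < (pos j).2 + (I.r j).h → (pos j).1 + (I.r j).w ≤ c :=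
      fun hx hy hy' => hcS j (Finset.mem_filter.2 ⟨Finset.mem_univ j, hj, hx, hy, hy'⟩)
    grind [hBL.feasible.separated hj.ne']
  rcases (hBL q).2 _ hslide with h | h
  · exact h.false
  · exact hcq.not_ge h.2

/-- Otherwise the rectangle `m` could be placed at `(z, t)`. -/
lemma IsBL.exists_intersects_of_firstAbove (hBL : I.IsBL pos) {m : Fin n} {t : ℝ} (ht : 0 ≤ t)
    (hm : FirstAbove pos t m) {z : ℝ} (hz : 0 ≤ z) (hzW : z + (I.r m).w ≤ I.W) :
    ∃ j < m, I.Intersects pos j t ∧ (pos j).1 < z + (I.r m).w ∧ z < (pos j).1 + (I.r j).w := by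
  by_contra! hnone
  have hplace : I.FeasibleAt pos m (z, t) := by
    refine ⟨⟨hz, hzW, ht⟩, fun j hj => ?_⟩
    rw [disjoint_openBox_iff (I.w_pos m) (I.h_pos m) (I.w_pos j) (I.h_pos j)]
    by_contra! hoverlap
    obtain ⟨⟨hx, hx'⟩, -, hy⟩ := hoverlap
    exact hx'.not_ge (hnone j hj ⟨hm.2 j hj, hy⟩ hx)
  rcases (hBL m).2 _ hplace with h | h
  · exact hm.1.not_gt h
  · exact hm.1.ne' h.1

lemma IsBL.exists_mem_intersects (hBL : I.IsBL pos) {t : ℝ} (ht : 0 ≤ t)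
    (htp : I.ProperLine pos t) {S : Finset (Fin n)}
    (hbelow : ∀ j ∉ S, (pos j).2 + (I.r j).h ≤ t) {i : Fin n}
    (hti : t < (pos i).2 + (I.r i).h) : ∃ j ∈ S, I.Intersects pos j t := by
  obtain ⟨j, hjt⟩ : ∃ j, I.Intersects pos j t := by
    rcases (htp i).1.lt_or_gt with hlt | hgt
    · obtain ⟨m, -, hm⟩ := htp.exists_firstAbove hlt
      obtain ⟨j, -, hjt, -⟩ := hBL.exists_intersects_of_firstAbove ht hm le_rfl
        (by simpa using I.w_le_W m)
      exact ⟨j, hjt⟩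
    · exact ⟨i, hgt, hti⟩
  exact ⟨j, by_contra fun hj => (hbelow j hj).not_gt hjt.2, hjt⟩

end BottomLeft

section LeftThird

/-- The width of the part of rectangle `i` lying in the left third `[0, W / 3]` of the strip. -/
noncomputable def leftThirdWidth (I : SPInstance n) (pos : Fin n → ℝ × ℝ) (i : Fin n) : ℝ :=
  min ((pos i).1 + (I.r i).w) (I.W / 3) - min (pos i).1 (I.W / 3)

lemma leftThirdWidth_nonneg (pos : Fin n → ℝ × ℝ) (i : Fin n) : 0 ≤ I.leftThirdWidth pos i :=
  sub_nonneg.2 (min_le_min_right _ (le_add_of_nonneg_right (I.w_pos i).le))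

end LeftThird

section Greedy

/-- One step of the greedy construction of `F`, offering the rectangle `i`. -/
noncomputable def greedyStep (I : SPInstance n) (F : Finset (Fin n)) (i : Fin n) :
    Finset (Fin n) :=
  if (I.r i).w + ∑ f ∈ F, (I.r f).w ≤ I.W then insert i F else F

lemma greedyF_eq_foldl_greedyStep (I : SPInstance n) (σ : Equiv.Perm (Fin n)) :
    I.greedyF σ = ((List.finRange n).map σ).foldl I.greedyStep ∅ := by
  rw [List.foldl_map]
  rfl

lemma sum_w_greedyStep_le {F : Finset (Fin n)} (hF : ∑ f ∈ F, (I.r f).w ≤ I.W) (i : Fin n) :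
    ∑ f ∈ I.greedyStep F i, (I.r f).w ≤ I.W := by
  unfold greedyStep
  split_ifs with hfits
  · by_cases hi : i ∈ F
    · rwa [Finset.insert_eq_of_mem hi]
    · rwa [Finset.sum_insert hi]
  · exact hF

lemma subset_greedyStep (F : Finset (Fin n)) (i : Fin n) : F ⊆ I.greedyStep F i := by
  unfold greedyStep
  split_ifs
  · exact Finset.subset_insert i F
  · exact subset_rfl

lemma greedyStep_subset_insert (F : Finset (Fin n)) (i : Fin n) :
    I.greedyStep F i ⊆ insert i F := by
  unfold greedyStep
  split_ifs
  · exact subset_rfl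
  · exact Finset.subset_insert i F

lemma sum_w_foldl_greedyStep_le (l : List (Fin n)) {F : Finset (Fin n)}
    (hF : ∑ f ∈ F, (I.r f).w ≤ I.W) : ∑ f ∈ l.foldl I.greedyStep F, (I.r f).w ≤ I.W := by
  induction l generalizing F with
  | nil => exact hF
  | cons i _ ih => exact ih (sum_w_greedyStep_le hF i)

lemma subset_foldl_greedyStep (l : List (Fin n)) (F : Finset (Fin n)) :
    F ⊆ l.foldl I.greedyStep F := by
  induction l generalizing F with
  | nil => exact subset_rfl
  | cons i _ ih => exact (subset_greedyStep F i).trans (ih _)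

lemma foldl_greedyStep_subset (l : List (Fin n)) (F : Finset (Fin n)) :
    l.foldl I.greedyStep F ⊆ F ∪ l.toFinset := by
  induction l generalizing F with
  | nil => simp
  | cons i l ih =>
    have hstep := greedyStep_subset_insert (I := I) F i
    refine (ih (I.greedyStep F i)).trans fun f hf => ?_
    grind [List.toFinset_cons]

end Greedy

end SPInstance

/-! ### The FQW-partition and the FQW-ordering -/

namespace FQW

open SPInstance

variable {n : ℕ} {I : SPInstance n} {d : FQW I} {pos : Fin n → ℝ × ℝ}

section Partition

lemma sum_w_F_le (d : FQW I) : ∑ f ∈ d.F, (I.r f).w ≤ I.W := by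
  rw [F, greedyF_eq_foldl_greedyStep]
  exact sum_w_foldl_greedyStep_le _ (by simpa using I.W_pos.le)

/-- The rectangles already in `F` when `i` is rejected are at least as high as `i`. -/
lemma W_lt_w_add_sum_of_notMem_F {i : Fin n} (hi : i ∉ d.F) :
    I.W < (I.r i).w + ∑ f ∈ d.F with (I.r i).h ≤ (I.r f).h, (I.r f).w := by
  obtain ⟨k, rfl⟩ := d.σ.surjective i
  obtain ⟨l₁, l₂, hl⟩ := List.append_of_mem (List.mem_finRange k)
  have hbefore : ∀ k' ∈ l₁, k' < k := fun k' hk' => by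
    have hsorted := List.pairwise_lt_finRange n
    rw [hl, List.pairwise_append] at hsorted
    exact hsorted.2.2 k' hk' k List.mem_cons_self
  set G := (l₁.map d.σ).foldl I.greedyStep ∅
  have hstep : I.greedyStep G (d.σ k) ⊆ d.F := by
    rw [F, greedyF_eq_foldl_greedyStep, hl, List.map_append, List.foldl_append, List.map_cons,
      List.foldl_cons]
    exact subset_foldl_greedyStep _ _
  have hrejected : I.W < (I.r (d.σ k)).w + ∑ f ∈ G, (I.r f).w := by
    by_contra! hfits
    refine hi (hstep ?_)
    rw [greedyStep, if_pos hfits]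
    exact Finset.mem_insert_self _ _
  refine hrejected.trans_le (add_le_add_right ?_ _)
  refine Finset.sum_le_sum_of_subset_of_nonneg (fun f hf => ?_) fun f _ _ => (I.w_pos f).le
  refine Finset.mem_filter.2 ⟨hstep (subset_greedyStep G _ hf), ?_⟩
  have hfl := foldl_greedyStep_subset _ _ hf
  simp only [Finset.empty_union, List.mem_toFinset, List.mem_map] at hfl
  obtain ⟨k', hk', rfl⟩ := hfl
  exact d.sorted k' k (hbefore k' hk').le

lemma notMem_F_of_mem_Q {i : Fin n} (hi : i ∈ d.Q) : i ∉ d.F :=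
  (Finset.mem_filter.1 hi).2.1

lemma w_le_half_of_mem_Q {i : Fin n} (hi : i ∈ d.Q) : (I.r i).w ≤ I.W / 2 :=
  not_lt.1 (Finset.mem_filter.1 hi).2.2

lemma half_lt_w_of_mem_Wset {i : Fin n} (hi : i ∈ d.Wset) : I.W / 2 < (I.r i).w :=
  (Finset.mem_filter.1 hi).2.2

lemma mem_F_or_mem_Q_or_mem_Wset (d : FQW I) (i : Fin n) : i ∈ d.F ∨ i ∈ d.Q ∨ i ∈ d.Wset := by
  simp only [Q, Wset, Finset.mem_filter_univ]
  tauto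

/-- Otherwise the line at half the height meets `i` and the rectangles of `F` at least as high,
which are too wide together. -/
lemma h_le_half_height {p : Fin n → ℝ × ℝ} (hp : I.Feasible p) {i : Fin n} (hi : i ∉ d.F) :
    (I.r i).h ≤ I.height p / 2 := by
  by_contra! hlt
  have hline : ∀ j ∈ insert i {f ∈ d.F | (I.r i).h ≤ (I.r f).h},
      I.Intersects p j (I.height p / 2) := fun j hj => by
    have hij : (I.r i).h ≤ (I.r j).h := by
      rcases Finset.mem_insert.1 hj with rfl | hj
      · rfl
      · exact (Finset.mem_filter.1 hj).2
    have hbottom := (hp.1 j).2.2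
    have htop := I.top_le_height p j
    constructor <;> linarith
  have hwidth := hp.sum_w_le hline
  rw [Finset.sum_insert (by simp [hi])] at hwidth
  exact hwidth.not_gt (W_lt_w_add_sum_of_notMem_F hi)

end Partition

section Ordering

variable {i j : Fin n}

lemma IsOrdered.mem_F_of_le (hord : d.IsOrdered) (hij : i ≤ j) (hj : j ∈ d.F) : i ∈ d.F :=
  (hord.1 i).2 (lt_of_le_of_lt hij ((hord.1 j).1 hj))

lemma IsOrdered.mem_Q_of_le (hord : d.IsOrdered) (hi : i ∉ d.F) (hij : i ≤ j) (hj : j ∈ d.Q) :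
    i ∈ d.Q :=
  (hord.2.1 i).2 ⟨not_lt.1 fun h => hi ((hord.1 i).2 h),
    lt_of_le_of_lt hij ((hord.2.1 j).1 hj).2⟩

lemma IsOrdered.h_le_of_le (hord : d.IsOrdered) (hij : i ≤ j) (hj : j ∈ d.F) :
    (I.r j).h ≤ (I.r i).h :=
  hord.2.2.1 i j hij ((hord.1 j).1 hj)

lemma IsOrdered.w_le_of_le (hord : d.IsOrdered) (hi : i ∉ d.F) (hij : i ≤ j) (hj : j ∈ d.Q) :
    (I.r j).w ≤ (I.r i).w :=
  hord.2.2.2 i j ((hord.2.1 i).1 (hord.mem_Q_of_le hi hij hj)).1 hij ((hord.2.1 j).1 hj).2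

end Ordering

/-! ### The row `F` in the Bottom-Left packing -/

section BottomRow

variable {f v : Fin n}

lemma IsOrdered.pos_eq_of_mem_F (hord : d.IsOrdered) (hBL : I.IsBL pos) (hf : f ∈ d.F) :
    pos f = (∑ j ∈ Finset.Iio f, (I.r j).w, 0) := by
  induction f using WellFoundedLT.induction with
  | ind f ih =>
  have hprev : ∀ j < f, pos j = (∑ k ∈ Finset.Iio j, (I.r k).w, 0) := fun j hj =>
    ih j hj (hord.mem_F_of_le hj.le hf)
  have hmono : ∀ j < f, ∑ k ∈ Finset.Iio j, (I.r k).w + (I.r j).w ≤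
      ∑ k ∈ Finset.Iio f, (I.r k).w := fun j hj => by
    rw [Finset.sum_Iio_add_eq_sum_Iic]
    exact Finset.sum_le_sum_of_subset_of_nonneg (by grind) fun k _ _ => (I.w_pos k).le
  have hplace : I.FeasibleAt pos f (∑ j ∈ Finset.Iio f, (I.r j).w, 0) := by
    refine ⟨⟨Finset.sum_nonneg fun k _ => (I.w_pos k).le, ?_, le_rfl⟩, fun j hj => ?_⟩
    · rw [Finset.sum_Iio_add_eq_sum_Iic]
      exact (Finset.sum_le_sum_of_subset_of_nonneg
        (fun k hk => hord.mem_F_of_le (Finset.mem_Iic.1 hk) hf)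
        fun k _ _ => (I.w_pos k).le).trans d.sum_w_F_le
    · rw [disjoint_openBox_iff (I.w_pos f) (I.h_pos f) (I.w_pos j) (I.h_pos j), hprev j hj]
      exact .inl (.inr (hmono j hj))
  obtain ⟨hx, -, hy⟩ := (hBL f).1.1
  rcases (hBL f).2 _ hplace with hlt | ⟨hy0, hle⟩
  · exact absurd hlt hy.not_gt
  refine Prod.ext (hle.antisymm ?_) hy0
  by_contra! hlt
  obtain ⟨j, hj, hjx, hxj⟩ :=
    exists_prefixSum_le_lt (by simpa using isLowerSet_Iio f) hx hlt
  have hjf := Finset.mem_Iio.1 hj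
  have hsep := hBL.feasible.separated hjf.ne
  rw [hprev j hjf, hy0] at hsep
  have := I.w_pos f
  have := I.h_pos f
  have := I.h_pos j
  rcases hsep with (h | h) | h | h <;> linarith

lemma IsOrdered.y_eq_zero_of_mem_F (hord : d.IsOrdered) (hBL : I.IsBL pos) (hf : f ∈ d.F) :
    (pos f).2 = 0 := by
  rw [hord.pos_eq_of_mem_F hBL hf]

lemma IsOrdered.x_eq_of_mem_F (hord : d.IsOrdered) (hBL : I.IsBL pos) (hf : f ∈ d.F) :
    (pos f).1 = ∑ j ∈ Finset.Iio f, (I.r j).w := by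
  rw [hord.pos_eq_of_mem_F hBL hf]

lemma IsOrdered.x_add_w_eq_of_mem_F (hord : d.IsOrdered) (hBL : I.IsBL pos) (hf : f ∈ d.F) :
    (pos f).1 + (I.r f).w = ∑ j ∈ Finset.Iic f, (I.r j).w := by
  rw [hord.x_eq_of_mem_F hBL hf, Finset.sum_Iio_add_eq_sum_Iic]

lemma IsOrdered.isLowerSet_F (hord : d.IsOrdered) : IsLowerSet (d.F : Set (Fin n)) :=
  fun _ _ hji hi => hord.mem_F_of_le hji hi

lemma IsOrdered.intersects_of_mem_F (hord : d.IsOrdered) (hBL : I.IsBL pos) (hf : f ∈ d.F)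
    {t : ℝ} (ht : 0 < t) (htf : t < (I.r f).h) : I.Intersects pos f t := by
  rw [Intersects, hord.y_eq_zero_of_mem_F hBL hf, zero_add]
  exact ⟨ht, htf⟩

lemma IsOrdered.lt_h_of_intersects (hord : d.IsOrdered) (hBL : I.IsBL pos) (hf : f ∈ d.F)
    {t : ℝ} (hft : I.Intersects pos f t) : t < (I.r f).h := by
  simpa [hord.y_eq_zero_of_mem_F hBL hf] using hft.2

/-- Otherwise the line at height `(y_v + h_v) / 2` meets `v` and the rectangles of `F` at least as
high, which are too wide together. -/
lemma IsOrdered.h_le_y_of_notMem_F (hord : d.IsOrdered) (hBL : I.IsBL pos) (hv : v ∉ d.F) :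
    (I.r v).h ≤ (pos v).2 := by
  by_contra! hlt
  have hy := (hBL.feasible.1 v).2.2
  have hline : ∀ j ∈ insert v {f ∈ d.F | (I.r v).h ≤ (I.r f).h},
      I.Intersects pos j (((pos v).2 + (I.r v).h) / 2) := fun j hj => by
    rcases Finset.mem_insert.1 hj with rfl | hj
    · constructor <;> linarith
    · obtain ⟨hjF, hvj⟩ := Finset.mem_filter.1 hj
      have := I.h_pos v
      exact hord.intersects_of_mem_F hBL hjF (by linarith) (by linarith)
  have hwidth := hBL.feasible.sum_w_le hline
  rw [Finset.sum_insert (by simp [hv])] at hwidth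
  exact hwidth.not_gt (W_lt_w_add_sum_of_notMem_F hv)

/-- The rectangles of `F` at least as high as `v` meet the first line, and `v` the second one. -/
lemma IsOrdered.W_lt_lineWidth_add_lineWidth (hord : d.IsOrdered) (hBL : I.IsBL pos)
    (hv : v ∉ d.F) {t : ℝ} (ht : t ∈ Set.Ioo 0 (I.r v).h) :
    I.W < I.lineWidth pos t + I.lineWidth pos (t + (pos v).2) := by
  have hF : ∑ f ∈ d.F with (I.r v).h ≤ (I.r f).h, (I.r f).w ≤ I.lineWidth pos t := by
    refine sum_w_le_lineWidth fun f hf => ?_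
    obtain ⟨hfF, hvf⟩ := Finset.mem_filter.1 hf
    exact hord.intersects_of_mem_F hBL hfF ht.1 (ht.2.trans_le hvf)
  have hwv : (I.r v).w ≤ I.lineWidth pos (t + (pos v).2) :=
    w_le_lineWidth ⟨by linarith [ht.1], by linarith [ht.2]⟩
  linarith [W_lt_w_add_sum_of_notMem_F hv]

end BottomRow

section CrossF

variable {f j : Fin n} {t : ℝ}

/-- The rectangles of `F` higher than `t`. As the Bottom-Left packing puts all of `F` on the
bottom of the strip, these are the rectangles of `F` meeting the line at height `t > 0`. -/
noncomputable def crossF (d : FQW I) (t : ℝ) : Finset (Fin n) :=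
  {f ∈ d.F | t < (I.r f).h}

/-- The total width of the rectangles of `F` higher than `t`. In the Bottom-Left packing this is
the paper's `x_F^ℓ`, the right end of the part of the line occupied by `F`. -/
noncomputable def xF (d : FQW I) (t : ℝ) : ℝ :=
  ∑ f ∈ d.crossF t, (I.r f).w

lemma mem_crossF : f ∈ d.crossF t ↔ f ∈ d.F ∧ t < (I.r f).h :=
  Finset.mem_filter

lemma xF_nonneg (d : FQW I) (t : ℝ) : 0 ≤ d.xF t :=
  Finset.sum_nonneg fun f _ => (I.w_pos f).le

lemma IsOrdered.isLowerSet_crossF (hord : d.IsOrdered) (t : ℝ) :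
    IsLowerSet (d.crossF t : Set (Fin n)) := fun i j hji hi => by
  obtain ⟨hiF, hti⟩ := mem_crossF.1 hi
  exact mem_crossF.2 ⟨hord.mem_F_of_le hji hiF, hti.trans_le (hord.h_le_of_le hji hiF)⟩

lemma IsOrdered.x_add_w_le_xF (hord : d.IsOrdered) (hBL : I.IsBL pos) (hf : f ∈ d.F)
    (hft : I.Intersects pos f t) : (pos f).1 + (I.r f).w ≤ d.xF t := by
  have hcross := mem_crossF.2 ⟨hf, hord.lt_h_of_intersects hBL hf hft⟩
  rw [hord.x_add_w_eq_of_mem_F hBL hf]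
  exact Finset.sum_le_sum_of_subset_of_nonneg
    (fun i hi => hord.isLowerSet_crossF t (Finset.mem_Iic.1 hi) hcross)
    fun i _ _ => (I.w_pos i).le

lemma IsOrdered.xF_le_x (hord : d.IsOrdered) (hBL : I.IsBL pos) (hj : j ∉ d.F)
    (hjt : (pos j).2 < t) : d.xF t ≤ (pos j).1 := by
  by_contra! hlt
  obtain ⟨hxj, -, hyj⟩ := hBL.feasible.1 j
  obtain ⟨f, hf, hfx, hxf⟩ := exists_prefixSum_le_lt (hord.isLowerSet_crossF t) hxj hlt
  obtain ⟨hfF, htf⟩ := mem_crossF.1 hf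
  have hsep := hBL.feasible.separated (i := f) (j := j) (by grind)
  rw [hord.pos_eq_of_mem_F hBL hfF] at hsep
  have := I.w_pos j
  have := I.h_pos j
  rcases hsep with (h | h) | h | h <;> linarith

end CrossF

/-! ### Lines below a rectangle of `Q` -/

section LineType

variable {m q j s : Fin n} {t : ℝ}

lemma IsOrdered.notMem_F_of_lt_y (hord : d.IsOrdered) (hBL : I.IsBL pos) (ht : 0 ≤ t)
    (hm : t < (pos m).2) : m ∉ d.F := fun hmF =>
  ht.not_gt (by rwa [hord.y_eq_zero_of_mem_F hBL hmF] at hm)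

lemma notMem_F_of_mem_typeOf (hj : j ∈ TypeOf I d pos t) : j ∉ d.F :=
  notMem_F_of_mem_Q (Finset.mem_filter.1 hj).2.1

lemma intersects_of_mem_typeOf (hj : j ∈ TypeOf I d pos t) : I.Intersects pos j t :=
  (Finset.mem_filter.1 hj).2.2.1

lemma lt_of_mem_typeOf (hm : FirstAbove pos t m) (hj : j ∈ TypeOf I d pos t) : j < m :=
  lt_of_not_ge fun hmj => hm.1.not_ge ((Finset.mem_filter.1 hj).2.2.2 m hmj)

lemma IsOrdered.mem_typeOf (hord : d.IsOrdered) (hmQ : m ∈ d.Q) (hm : FirstAbove pos t m)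
    (hjm : j < m) (hjF : j ∉ d.F) (hjt : I.Intersects pos j t) : j ∈ TypeOf I d pos t :=
  Finset.mem_filter.2 ⟨Finset.mem_univ j, hord.mem_Q_of_le hjF hjm.le hmQ, hjt,
    fun k hkj => (hm.2 k (hkj.trans_lt hjm)).le⟩

lemma IsOrdered.w_le_w_of_mem_typeOf (hord : d.IsOrdered) (hmQ : m ∈ d.Q)
    (hm : FirstAbove pos t m) (hj : j ∈ TypeOf I d pos t) : (I.r m).w ≤ (I.r j).w :=
  hord.w_le_of_le (notMem_F_of_mem_typeOf hj) (lt_of_mem_typeOf hm hj).le hmQ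

lemma IsOrdered.xF_add_sum_typeOf_le_lineWidth (hord : d.IsOrdered) (hBL : I.IsBL pos)
    (ht : 0 < t) : d.xF t + ∑ j ∈ TypeOf I d pos t, (I.r j).w ≤ I.lineWidth pos t := by
  have hdisj : Disjoint (d.crossF t) (TypeOf I d pos t) := Finset.disjoint_left.2 fun j hjF hj =>
    notMem_F_of_mem_typeOf hj (mem_crossF.1 hjF).1
  rw [xF, ← Finset.sum_union hdisj]
  refine sum_w_le_lineWidth fun j hj => ?_
  rcases Finset.mem_union.1 hj with hj | hj
  · obtain ⟨hjF, htj⟩ := mem_crossF.1 hj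
    exact hord.intersects_of_mem_F hBL hjF ht htj
  · exact intersects_of_mem_typeOf hj

lemma IsOrdered.lt_xF_or_exists_mem_typeOf (hord : d.IsOrdered) (hBL : I.IsBL pos)
    (ht : 0 ≤ t) (hmQ : m ∈ d.Q) (hm : FirstAbove pos t m) {z : ℝ} (hz : 0 ≤ z)
    (hzW : z + (I.r m).w ≤ I.W) :
    z < d.xF t ∨ ∃ j ∈ TypeOf I d pos t, (pos j).1 < z + (I.r m).w ∧ z < (pos j).1 + (I.r j).w := by
  obtain ⟨j, hjm, hjt, hjz, hzj⟩ := hBL.exists_intersects_of_firstAbove ht hm hz hzW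
  by_cases hjF : j ∈ d.F
  · exact .inl (hzj.trans_le (hord.x_add_w_le_xF hBL hjF hjt))
  · exact .inr ⟨j, hord.mem_typeOf hmQ hm hjm hjF hjt, hjz, hzj⟩

lemma IsOrdered.W_lt_two_mul_xF_of_typeOf_eq_empty (hord : d.IsOrdered) (hBL : I.IsBL pos)
    (ht : 0 ≤ t) (hmQ : m ∈ d.Q) (hm : FirstAbove pos t m) (hempty : TypeOf I d pos t = ∅) :
    I.W < 2 * d.xF t := by
  have hwm := w_le_half_of_mem_Q hmQ
  have hW := I.W_pos
  rcases hord.lt_xF_or_exists_mem_typeOf hBL ht hmQ hm (z := I.W - (I.r m).w) (by linarith)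
    (by linarith) with hlt | ⟨j, hj, -⟩
  · linarith
  · simp [hempty] at hj

lemma exists_isLM (hne : (TypeOf I d pos t).Nonempty) : ∃ q, IsLM I d pos t q :=
  (TypeOf I d pos t).exists_min_image (fun j => (pos j).1) hne

lemma IsOrdered.x_lt_xF_add_w_of_isLM (hord : d.IsOrdered) (hBL : I.IsBL pos) (ht : 0 ≤ t)
    (hmQ : m ∈ d.Q) (hm : FirstAbove pos t m) (hq : IsLM I d pos t q) :
    (pos q).1 < d.xF t + (I.r m).w := by
  by_contra! hge
  have hqW := (hBL.feasible.1 q).2.1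
  have hwq := I.w_pos q
  rcases hord.lt_xF_or_exists_mem_typeOf hBL ht hmQ hm (d.xF_nonneg t) (by linarith) with
    hlt | ⟨j, hj, hjx, -⟩
  · exact hlt.false
  · linarith [hq.2 j hj]

/-- Every window of width `w_m` to the right of `LM(ℓ)` meets a rectangle of `T(ℓ)`, which is at
least as wide as the window; so stretching those rectangles to twice their width covers the line
from `LM(ℓ)` on. -/
lemma IsOrdered.W_sub_x_le_two_mul_sum_typeOf (hord : d.IsOrdered) (hBL : I.IsBL pos)
    (ht : 0 ≤ t) (hmQ : m ∈ d.Q) (hm : FirstAbove pos t m) (hq : IsLM I d pos t q) :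
    I.W - (pos q).1 ≤ 2 * ∑ j ∈ TypeOf I d pos t, (I.r j).w := by
  have hcover := length_le_sum_of_ae_cover (S := TypeOf I d pos t) (a := (pos q).1) (b := I.W)
    (u := fun j => (pos j).1) (v := fun j => (pos j).1 + 2 * (I.r j).w)
    (fun j _ => by linarith [I.w_pos j]) <| .of_forall fun z hz => by
      by_cases hzq : z ≤ (pos q).1 + 2 * (I.r q).w
      · exact ⟨q, hq.1, hz.1.le, hzq⟩
      have hwq := hord.w_le_w_of_mem_typeOf hmQ hm hq.1
      have hxq := hord.xF_le_x hBL (notMem_F_of_mem_typeOf hq.1) (intersects_of_mem_typeOf hq.1).1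
      have hwm := I.w_pos m
      rcases hord.lt_xF_or_exists_mem_typeOf hBL ht hmQ hm (z := z - (I.r m).w)
        (by linarith [(hBL.feasible.1 q).1]) (by linarith [hz.2]) with hlt | ⟨j, hj, hjz, hzj⟩
      · linarith
      · exact ⟨j, hj, by linarith, by linarith [hord.w_le_w_of_mem_typeOf hmQ hm hj]⟩
  simpa [Finset.mul_sum] using hcover

/-- A left supporter of `LM(ℓ)` meeting the line would be a rectangle of `T(ℓ)` to the left of
`LM(ℓ)` or a rectangle of `F` to the right of `x_F^ℓ`. -/
lemma IsOrdered.top_lt_of_isLeftSupporter (hord : d.IsOrdered) (hBL : I.IsBL pos)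
    (htp : I.ProperLine pos t) (hmQ : m ∈ d.Q) (hm : FirstAbove pos t m)
    (hq : IsLM I d pos t q) (hxq : d.xF t < (pos q).1) (hs : I.IsLeftSupporter pos q s) :
    (pos s).2 + (I.r s).h < t := by
  have hsm : s < m := hs.1.trans (lt_of_mem_typeOf hm hq.1)
  by_contra! hge
  have hst : I.Intersects pos s t := ⟨hm.2 s hsm, hge.lt_of_ne (htp s).2⟩
  by_cases hsF : s ∈ d.F
  · linarith [hord.x_add_w_le_xF hBL hsF hst, hs.2.1]
  · linarith [hq.2 s (hord.mem_typeOf hmQ hm hsm hsF hst), hs.2.1, I.w_pos s]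

/-- A left supporter of `LM(ℓ)` outside `F` would not fit between `x_F^ℓ` and `LM(ℓ)`. -/
lemma IsOrdered.mem_F_of_isLeftSupporter (hord : d.IsOrdered) (hBL : I.IsBL pos) (ht : 0 ≤ t)
    (hmQ : m ∈ d.Q) (hm : FirstAbove pos t m) (hq : IsLM I d pos t q)
    (hs : I.IsLeftSupporter pos q s) : s ∈ d.F := by
  by_contra hsF
  have hsm : s < m := hs.1.trans (lt_of_mem_typeOf hm hq.1)
  have hxs := hord.xF_le_x hBL hsF (hm.2 s hsm)
  have hws := hord.w_le_of_le hsF hsm.le hmQ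
  linarith [hord.x_lt_xF_add_w_of_isLM hBL ht hmQ hm hq, hs.2.1]

end LineType

/-! ### Charging the deficit of a line -/

section Charge

variable {m q s : Fin n} {t H K : ℝ}

/-- The charge of the line at height `t`: every rectangle of `F` gives the width of its part in
the left third of the strip to each line among the first `H / 2` above its top face. -/
noncomputable def charge (d : FQW I) (pos : Fin n → ℝ × ℝ) (H : ℝ) : ℝ → ℝ :=
  stepSum d.F (I.leftThirdWidth pos) (fun f => (I.r f).h) fun f => (I.r f).h + H / 2

lemma charge_nonneg (d : FQW I) (pos : Fin n → ℝ × ℝ) (H t : ℝ) : 0 ≤ d.charge pos H t :=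
  stepSum_nonneg (fun f _ => leftThirdWidth_nonneg pos f) t

lemma IsOrdered.sum_leftThirdWidth (hord : d.IsOrdered) (hBL : I.IsBL pos) {A : Finset (Fin n)}
    (hA : IsLowerSet (A : Set (Fin n))) (hAF : A ⊆ d.F) :
    ∑ f ∈ A, I.leftThirdWidth pos f = min (∑ f ∈ A, (I.r f).w) (I.W / 3) := by
  have hW := I.W_pos
  calc ∑ f ∈ A, I.leftThirdWidth pos f
      = ∑ f ∈ A, (min (∑ j ∈ Finset.Iio f, (I.r j).w + (I.r f).w) (I.W / 3) -
          min (∑ j ∈ Finset.Iio f, (I.r j).w) (I.W / 3)) :=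
        Finset.sum_congr rfl fun f hf => by
          rw [leftThirdWidth, hord.x_eq_of_mem_F hBL (hAF hf)]
    _ = min (∑ f ∈ A, (I.r f).w) (I.W / 3) - min 0 (I.W / 3) :=
        sum_comp_prefixSum_sub (fun j => (I.r j).w) (fun x => min x (I.W / 3)) hA
    _ = min (∑ f ∈ A, (I.r f).w) (I.W / 3) := by
        rw [min_eq_left (a := 0) (by positivity), sub_zero]

lemma IsOrdered.integral_charge_le (hord : d.IsOrdered) (hBL : I.IsBL pos) (hH : 0 ≤ H)
    (hK : 0 ≤ K) : ∫ t in (0 : ℝ)..K, d.charge pos H t ≤ I.W * H / 6 := by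
  calc ∫ t in (0 : ℝ)..K, d.charge pos H t
      ≤ ∑ f ∈ d.F, ((I.r f).h + H / 2 - (I.r f).h) * I.leftThirdWidth pos f :=
        intervalIntegral_stepSum_le hK (fun f _ => leftThirdWidth_nonneg pos f)
          fun f _ => le_add_of_nonneg_right (by positivity)
    _ = H / 2 * min (∑ f ∈ d.F, (I.r f).w) (I.W / 3) := by
        rw [← hord.sum_leftThirdWidth hBL hord.isLowerSet_F subset_rfl, Finset.mul_sum]
        simp only [add_sub_cancel_left]
    _ ≤ H / 2 * (I.W / 3) := by gcongr; exact min_le_right _ _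
    _ = I.W * H / 6 := by ring

/-- The rectangles of `F` from the right end of `x_F^ℓ` up to `s` end below the line, but not more
than `H / 2` below. -/
lemma IsOrdered.min_sub_min_le_charge (hord : d.IsOrdered) (hBL : I.IsBL pos)
    (htp : I.ProperLine pos t) (hs : s ∈ d.F) (hst : (I.r s).h < t)
    (htH : t < (I.r s).h + H / 2) :
    min ((pos s).1 + (I.r s).w) (I.W / 3) - min (d.xF t) (I.W / 3) ≤ d.charge pos H t := by
  have hsF : Finset.Iic s ⊆ d.F := fun i hi => hord.mem_F_of_le (Finset.mem_Iic.1 hi) hs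
  have hcross : d.crossF t ⊆ Finset.Iic s := fun i hi => Finset.mem_Iic.2 <| le_of_not_gt fun hsi =>
    hst.not_gt ((mem_crossF.1 hi).2.trans_le (hord.h_le_of_le hsi.le (mem_crossF.1 hi).1))
  have hleft : ∑ i ∈ Finset.Iic s \ d.crossF t, I.leftThirdWidth pos i =
      min ((pos s).1 + (I.r s).w) (I.W / 3) - min (d.xF t) (I.W / 3) := by
    rw [Finset.sum_sdiff_eq_sub hcross,
      hord.sum_leftThirdWidth hBL (by simpa using isLowerSet_Iic s) hsF,
      hord.sum_leftThirdWidth hBL (hord.isLowerSet_crossF t) (hcross.trans hsF),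
      hord.x_add_w_eq_of_mem_F hBL hs, xF]
  rw [← hleft]
  refine sum_le_stepSum (fun f _ => leftThirdWidth_nonneg pos f)
    (Finset.sdiff_subset.trans hsF) fun i hi => ?_
  obtain ⟨his, hit⟩ := Finset.mem_sdiff.1 hi
  have htop := (htp i).2
  rw [hord.y_eq_zero_of_mem_F hBL (hsF his), zero_add] at htop
  have hle : (I.r i).h ≤ t := not_lt.1 fun h => hit (mem_crossF.2 ⟨hsF his, h⟩)
  exact ⟨hle.lt_of_ne htop.symm, by linarith [hord.h_le_of_le (Finset.mem_Iic.1 his) hs]⟩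

lemma IsOrdered.min_x_sub_min_xF_le_charge (hord : d.IsOrdered) (hBL : I.IsBL pos)
    (hH : ∀ i ∉ d.F, (I.r i).h ≤ H / 2) (ht : 0 < t) (htp : I.ProperLine pos t)
    (hmQ : m ∈ d.Q) (hm : FirstAbove pos t m) (hq : IsLM I d pos t q)
    (hxq : d.xF t < (pos q).1) :
    min (pos q).1 (I.W / 3) - min (d.xF t) (I.W / 3) ≤ d.charge pos H t := by
  obtain ⟨s, hs⟩ := hBL.exists_isLeftSupporter ((d.xF_nonneg t).trans_lt hxq)
  have hsF := hord.mem_F_of_isLeftSupporter hBL ht.le hmQ hm hq hs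
  have hst := hord.top_lt_of_isLeftSupporter hBL htp hmQ hm hq hxq hs
  have hqs := hs.2.2.2
  rw [hord.y_eq_zero_of_mem_F hBL hsF, zero_add] at hst hqs
  rw [← hs.2.1]
  exact hord.min_sub_min_le_charge hBL htp hsF hst (by
    linarith [hH q (notMem_F_of_mem_typeOf hq.1), (intersects_of_mem_typeOf hq.1).2])

lemma IsOrdered.W_sub_two_mul_lineWidth_le_charge (hord : d.IsOrdered) (hBL : I.IsBL pos)
    (hH : ∀ i ∉ d.F, (I.r i).h ≤ H / 2) (ht : 0 < t) (htp : I.ProperLine pos t)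
    (hmQ : m ∈ d.Q) (hm : FirstAbove pos t m) :
    I.W - 2 * I.lineWidth pos t ≤ d.charge pos H t := by
  have hcharge := d.charge_nonneg pos H t
  have hX := d.xF_nonneg t
  have hwidth := hord.xF_add_sum_typeOf_le_lineWidth hBL ht
  rcases (TypeOf I d pos t).eq_empty_or_nonempty with hempty | hne
  · have hW := hord.W_lt_two_mul_xF_of_typeOf_eq_empty hBL ht.le hmQ hm hempty
    rw [hempty, Finset.sum_empty] at hwidth
    linarith
  obtain ⟨q, hq⟩ := exists_isLM hne
  have hcover := hord.W_sub_x_le_two_mul_sum_typeOf hBL ht.le hmQ hm hq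
  have hdeficit_x : I.W - 2 * I.lineWidth pos t + d.xF t ≤ (pos q).1 := by linarith
  have hdeficit_third : I.W - 2 * I.lineWidth pos t + d.xF t ≤ I.W / 3 := by
    have hgap := hord.x_lt_xF_add_w_of_isLM hBL ht.le hmQ hm hq
    have hwq := (hord.w_le_w_of_mem_typeOf hmQ hm hq.1).trans
      (Finset.single_le_sum (f := fun j => (I.r j).w) (fun j _ => (I.w_pos j).le) hq.1)
    linarith
  rcases le_or_gt (pos q).1 (d.xF t) with hle | hlt
  · linarith
  calc I.W - 2 * I.lineWidth pos t ≤ min (pos q).1 (I.W / 3) - d.xF t :=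
        le_sub_iff_add_le.2 (le_min hdeficit_x hdeficit_third)
    _ ≤ min (pos q).1 (I.W / 3) - min (d.xF t) (I.W / 3) := by gcongr; exact min_le_left _ _
    _ ≤ d.charge pos H t := hord.min_x_sub_min_xF_le_charge hBL hH ht htp hmQ hm hq hlt

end Charge

/-! ### The height of the Bottom-Left packing -/

section Height

variable {p : Fin n → ℝ × ℝ} {i v : Fin n} {t K : ℝ}

/-- The lines below `h_v` are paired with those meeting `v`, the lines in between are paid for by
the charge. -/
lemma IsOrdered.integral_deficit_sub_charge_nonpos (hord : d.IsOrdered) (hBL : I.IsBL pos)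
    (hp : I.Feasible p) (hv : v ∈ d.Q) (hK : (pos v).2 + (I.r v).h ≤ K)
    (habove : ∀ t ∈ Set.Ioo ((pos v).2 + (I.r v).h) K, I.ProperLine pos t →
      I.W ≤ 2 * I.lineWidth pos t) :
    ∫ t in (0 : ℝ)..K, (I.W - 2 * I.lineWidth pos t - d.charge pos (I.height p) t) ≤ 0 := by
  have hvF := notMem_F_of_mem_Q hv
  have hcharge := d.charge_nonneg pos (I.height p)
  refine intervalIntegral_nonpos_of_paired (a := (I.r v).h) (b := (pos v).2) (fun a b => ?_)
    (I.h_pos v).le (hord.h_le_y_of_notMem_F hBL hvF) hK (fun t ht => ?_) ?_ ?_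
  · exact (intervalIntegrable_const.sub ((intervalIntegrable_stepSum ..).const_mul 2)).sub
      (intervalIntegrable_stepSum ..)
  · linarith [hord.W_lt_lineWidth_add_lineWidth hBL hvF ht, hcharge t, hcharge (t + (pos v).2)]
  · filter_upwards [I.ae_properLine pos] with t htp ht
    have ht0 : 0 < t := (I.h_pos v).trans ht.1
    obtain ⟨m, hmv, hm⟩ := htp.exists_firstAbove ht.2
    have hmQ := hord.mem_Q_of_le (hord.notMem_F_of_lt_y hBL ht0.le hm.1) hmv hv
    exact sub_nonpos.2 <| hord.W_sub_two_mul_lineWidth_le_charge hBL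
      (fun i hi => h_le_half_height hp hi) ht0 htp hmQ hm
  · filter_upwards [I.ae_properLine pos] with t htp ht
    linarith [habove t ht htp, hcharge t]

lemma IsOrdered.le_of_mem_Q_of_half_occupied_above (hord : d.IsOrdered) (hBL : I.IsBL pos)
    (hp : I.Feasible p) (hv : v ∈ d.Q) (hK : (pos v).2 + (I.r v).h ≤ K)
    (habove : ∀ t ∈ Set.Ioo ((pos v).2 + (I.r v).h) K, I.ProperLine pos t →
      I.W ≤ 2 * I.lineWidth pos t) : K ≤ 13 / 6 * I.height p := by
  have hK0 : 0 ≤ K := (add_nonneg (hBL.feasible.1 v).2.2 (I.h_pos v).le).trans hK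
  have htotal : ∫ t in (0 : ℝ)..K, (I.W - 2 * I.lineWidth pos t - d.charge pos (I.height p) t) =
      I.W * K - 2 * (∫ t in (0 : ℝ)..K, I.lineWidth pos t) -
        ∫ t in (0 : ℝ)..K, d.charge pos (I.height p) t := by
    have hwidth : IntervalIntegrable (fun t => 2 * I.lineWidth pos t) volume 0 K :=
      (intervalIntegrable_stepSum ..).const_mul 2
    have hcharge : IntervalIntegrable (d.charge pos (I.height p)) volume 0 K :=
      intervalIntegrable_stepSum ..
    rw [intervalIntegral.integral_sub (intervalIntegrable_const.sub hwidth) hcharge,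
      intervalIntegral.integral_sub intervalIntegrable_const hwidth,
      intervalIntegral.integral_const_mul]
    simp [mul_comm]
  have hnonpos := hord.integral_deficit_sub_charge_nonpos hBL hp hv hK habove
  have harea := (integral_lineWidth_le pos hK0).trans hp.area_le
  have hcharge := hord.integral_charge_le hBL hp.height_nonneg hK0
  have hWK : I.W * K ≤ I.W * (13 / 6 * I.height p) := by linarith
  exact le_of_mul_le_mul_left hWK I.W_pos

lemma IsOrdered.top_le_height_of_mem_F (hord : d.IsOrdered) (hBL : I.IsBL pos)
    (hp : I.Feasible p) (hi : i ∈ d.F) : (pos i).2 + (I.r i).h ≤ I.height p := by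
  rw [hord.y_eq_zero_of_mem_F hBL hi]
  linarith [(hp.1 i).2.2, I.top_le_height p i]

/-- Above `I.height p` every line below the top of `i` meets a rectangle of `𝒲`, and in `p` no two
of these lie side by side. -/
lemma top_le_two_mul_height (hBL : I.IsBL pos) (hp : I.Feasible p)
    (hbelow : ∀ j ∉ d.Wset, (pos j).2 + (I.r j).h ≤ I.height p) (i : Fin n) :
    (pos i).2 + (I.r i).h ≤ 2 * I.height p := by
  have hcover := length_le_sum_of_ae_cover (S := d.Wset) (a := I.height p)
    (b := (pos i).2 + (I.r i).h) (u := fun j => (pos j).2) (v := fun j => (pos j).2 + (I.r j).h)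
    (fun j _ => le_add_of_nonneg_right (I.h_pos j).le) <| by
      filter_upwards [I.ae_properLine pos] with t htp ht
      obtain ⟨j, hj, hjt⟩ := hBL.exists_mem_intersects (hp.height_nonneg.trans ht.1.le) htp
        (fun j hj => (hbelow j hj).trans ht.1.le) ht.2
      exact ⟨j, hj, hjt.1.le, hjt.2.le⟩
  simp only [add_sub_cancel_left] at hcover
  linarith [hp.sum_h_le_height_of_half_lt_w fun j (hj : j ∈ d.Wset) => half_lt_w_of_mem_Wset hj]

lemma IsOrdered.top_le (hord : d.IsOrdered) (hBL : I.IsBL pos) (hp : I.Feasible p)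
    (i : Fin n) : (pos i).2 + (I.r i).h ≤ 13 / 6 * I.height p := by
  have hH := hp.height_nonneg
  by_cases hbelow : ∀ j ∉ d.Wset, (pos j).2 + (I.r j).h ≤ I.height p
  · linarith [top_le_two_mul_height hBL hp hbelow i]
  push Not at hbelow
  obtain ⟨u, huW, hu⟩ := hbelow
  obtain ⟨v, hvW, hmax⟩ := d.Wsetᶜ.exists_max_image (fun j => (pos j).2 + (I.r j).h)
    ⟨u, Finset.mem_compl.2 huW⟩
  have hvH : I.height p < (pos v).2 + (I.r v).h := hu.trans_le (hmax u (Finset.mem_compl.2 huW))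
  have hvQ : v ∈ d.Q := by
    rcases d.mem_F_or_mem_Q_or_mem_Wset v with hv | hv | hv
    · exact absurd (hord.top_le_height_of_mem_F hBL hp hv) hvH.not_ge
    · exact hv
    · exact absurd hv (Finset.mem_compl.1 hvW)
  refine (le_max_left _ ((pos v).2 + (I.r v).h)).trans <|
    hord.le_of_mem_Q_of_half_occupied_above hBL hp hvQ (le_max_right _ _) fun t ht htp => ?_
  have hti : t < (pos i).2 + (I.r i).h := (lt_max_iff.1 ht.2).resolve_right ht.1.not_gt
  obtain ⟨j, hj, hjt⟩ := hBL.exists_mem_intersects (hH.trans (hvH.trans ht.1).le) htp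
    (fun j hj => (hmax j (Finset.mem_compl.2 hj)).trans ht.1.le) hti
  linarith [half_lt_w_of_mem_Wset hj, w_le_lineWidth hjt]

lemma IsOrdered.height_le (hord : d.IsOrdered) (hBL : I.IsBL pos) (hp : I.Feasible p) :
    I.height pos ≤ 13 / 6 * I.height p :=
  Real.iSup_le (hord.top_le hBL hp) (by linarith [hp.height_nonneg])

end Height

end FQW

/-- **Theorem (13/6-approximation).** If the rectangles of a Strip Packing
instance are listed in the FQW-ordering, then the height of the Bottom-Left
packing is at most `13/6` times the optimum height. -/
theorem bl_fqw_thirteen_sixths {n : ℕ} (I : SPInstance n) (d : FQW I)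
    (hord : d.IsOrdered) (pos : Fin n → ℝ × ℝ) (hBL : I.IsBL pos) :
    I.height pos ≤ 13 / 6 * I.hOPT := by
  have hlower : I.height pos / (13 / 6) ≤ I.hOPT := by
    refine le_csInf ⟨I.height pos, pos, hBL.feasible, rfl⟩ ?_
    rintro _ ⟨p, hp, rfl⟩
    linarith [hord.height_le hBL hp]
  linarith
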